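/- For j ∈ {1,2}, the vector β_j is an eigenvector of the matrix C^(q) with eigenvalue λ_j, i.e. C^(q)·β_j = λ_j·β_j. -/

import Mathlib

open Real Finset

noncomputable section

/-- `λ_j = ((μ−1) + (−1)^{j+1}·√(μ²−(4/q−2)μ+1))/2` for `j ∈ {1,2}`. -/
def lamJ (q : ℕ) (μ : ℝ) (j : ℕ) : ℝ :=
  ((μ - 1) + (-1 : ℝ) ^ (j + 1) * Real.sqrt (μ ^ 2 - (4 / (q : ℝ) - 2) * μ + 1)) / 2

/-- `m_j = λ_j + 1`. -/
def mJ (q : ℕ) (μ : ℝ) (j : ℕ) : ℝ := lamJ q μ j + 1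

/-- `x_j = 1 − q·m_j`. -/
def xJ (q : ℕ) (μ : ℝ) (j : ℕ) : ℝ := 1 - (q : ℝ) * mJ q μ j

/-- `β_j ∈ ℝ^q`, with `β_{j,k} = (q−1+x_j²)^{−1/2}·(1 if k ≠ q; x_j if k = q)`
(indices `k` are 1-based in the paper, so `k = q` means the last coordinate). -/
def betaVec (q : ℕ) (μ : ℝ) (j : ℕ) : Fin q → ℝ :=
  fun k => (Real.sqrt ((q : ℝ) - 1 + xJ q μ j ^ 2))⁻¹ *
    (if (k : ℕ) + 1 = q then xJ q μ j else 1)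

/-- The matrix `C^(q)` with entries `C_{ij} = −1/q + μ·δ_{iq}δ_{jq}`. -/
def Cmat (q : ℕ) (μ : ℝ) : Matrix (Fin q) (Fin q) ℝ :=
  Matrix.of fun i j =>
    -(1 / (q : ℝ)) + if (i : ℕ) + 1 = q ∧ (j : ℕ) + 1 = q then μ else 0

/-!
`C^(q)` is a constant matrix plus a multiple of the matrix unit at the last diagonal entry, so on
vectors `(1, …, 1, x)` the eigenvalue equation reduces to two scalar equations: the coordinates
other than the last force `x = 1 − q(λ + 1)`, and the last one then says that `λ` is a root of
`t² − (μ − 1)t − μ(1 − 1/q)`. The discriminant of this quadratic is nonnegative for every real `μ`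
and its roots are `λ_1` and `λ_2`.
-/

section ConstAddSingle

variable {ι R : Type*} [DecidableEq ι]

lemma update_one_ne_zero [Nontrivial ι] [Zero R] [One R] [NeZero (1 : R)] (a : ι) (x : R) :
    Function.update (1 : ι → R) a x ≠ 0 := by
  obtain ⟨b, hb⟩ := exists_ne a
  exact Function.ne_iff.mpr ⟨b, by simp [hb]⟩

variable [Fintype ι] [Ring R]

lemma sum_update_one (a : ι) (x : R) :
    ∑ i, Function.update (1 : ι → R) a x i = Fintype.card ι - 1 + x := by
  have one_le_card : 1 ≤ Fintype.card ι := Fintype.card_pos_iff.mpr ⟨a⟩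
  simp [sum_update_of_mem, card_univ_sdiff, Nat.cast_sub one_le_card, add_comm]

lemma const_add_single_mulVec_update_one (c μ x : R) (a : ι) :
    (Matrix.of (fun _ _ => c) + Matrix.single a a μ).mulVec (Function.update 1 a x) =
      Function.const ι (c * (Fintype.card ι - 1 + x)) + Pi.single a (μ * x) := by
  have const_mulVec : (Matrix.of fun _ _ : ι => c).mulVec (Function.update 1 a x) =
      Function.const ι (c * (Fintype.card ι - 1 + x)) := by
    ext i
    simp only [Matrix.mulVec, dotProduct, Matrix.of_apply, ← mul_sum, sum_update_one,
      Function.const_apply]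
  rw [Matrix.add_mulVec, const_mulVec, Matrix.single_mulVec, Function.update_self, Pi.single]

lemma const_add_single_mulVec_update_one_eq_smul {c μ x l : R} (a : ι)
    (h_ne : c * (Fintype.card ι - 1 + x) = l) (h_eq : l + μ * x = l * x) :
    (Matrix.of (fun _ _ => c) + Matrix.single a a μ).mulVec (Function.update 1 a x) =
      l • Function.update (1 : ι → R) a x := by
  rw [const_add_single_mulVec_update_one, h_ne]
  ext i
  rcases eq_or_ne i a with rfl | hi
  · simpa using h_eq
  · simp [hi]

end ConstAddSingle

section Coefficients

lemma lamJ_discrim_nonneg (q : ℕ) (μ : ℝ) :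
    0 ≤ μ ^ 2 - (4 / (q : ℝ) - 2) * μ + 1 := by
  have inv_le_one : (q : ℝ)⁻¹ ≤ 1 := Nat.cast_inv_le_one q
  calc
    0 ≤ (μ + (1 - 2 * (q : ℝ)⁻¹)) ^ 2 + 4 * ((q : ℝ)⁻¹ * (1 - (q : ℝ)⁻¹)) := by
      have := sub_nonneg.mpr inv_le_one
      positivity
    _ = μ ^ 2 - (4 / (q : ℝ) - 2) * μ + 1 := by ring

lemma lamJ_sq (q : ℕ) (μ : ℝ) (j : ℕ) :
    lamJ q μ j ^ 2 = (μ - 1) * lamJ q μ j + μ * (1 - 1 / (q : ℝ)) := by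
  have sq_sqrt_discrim := sq_sqrt (lamJ_discrim_nonneg q μ)
  have sq_sign : ((-1 : ℝ) ^ (j + 1)) ^ 2 = 1 := by
    rw [← pow_mul, mul_comm, pow_mul, neg_one_sq, one_pow]
  unfold lamJ
  linear_combination (sq_sqrt_discrim +
    √(μ ^ 2 - (4 / (q : ℝ) - 2) * μ + 1) ^ 2 * sq_sign) / 4

variable {q : ℕ}

lemma neg_one_div_mul_sub_one_add_xJ (hq : q ≠ 0) (μ : ℝ) (j : ℕ) :
    -(1 / (q : ℝ)) * (q - 1 + xJ q μ j) = lamJ q μ j := by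
  have : (q : ℝ) ≠ 0 := Nat.cast_ne_zero.mpr hq
  unfold xJ mJ
  field_simp
  ring

lemma lamJ_add_mul_xJ (hq : q ≠ 0) (μ : ℝ) (j : ℕ) :
    lamJ q μ j + μ * xJ q μ j = lamJ q μ j * xJ q μ j := by
  have mul_inv_q : (q : ℝ) * (1 / q) = 1 := mul_one_div_cancel (Nat.cast_ne_zero.mpr hq)
  unfold xJ mJ
  linear_combination (q : ℝ) * lamJ_sq q μ j - μ * mul_inv_q

lemma sqrt_sub_one_add_xJ_sq_pos (hq : 2 ≤ q) (μ : ℝ) (j : ℕ) :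
    0 < √((q : ℝ) - 1 + xJ q μ j ^ 2) := by
  have one_lt_q : (1 : ℝ) < q := Nat.one_lt_cast.mpr hq
  exact sqrt_pos.mpr (add_pos_of_pos_of_nonneg (sub_pos.mpr one_lt_q) (sq_nonneg _))

end Coefficients

section LastCoordinate

variable {q : ℕ}

lemma exists_val_add_one_eq (hq : q ≠ 0) : ∃ a : Fin q, (a : ℕ) + 1 = q :=
  ⟨⟨q - 1, by omega⟩, Nat.sub_add_cancel (Nat.one_le_iff_ne_zero.mpr hq)⟩

variable {a : Fin q}

lemma val_add_one_eq_iff_eq (ha : (a : ℕ) + 1 = q) (k : Fin q) : (k : ℕ) + 1 = q ↔ k = a := by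
  rw [Fin.ext_iff]
  omega

lemma Cmat_eq_const_add_single (ha : (a : ℕ) + 1 = q) (μ : ℝ) :
    Cmat q μ = Matrix.of (fun _ _ => -(1 / (q : ℝ))) + Matrix.single a a μ := by
  ext i k
  simp [Cmat, Matrix.single_apply, val_add_one_eq_iff_eq ha, eq_comm]

lemma betaVec_eq_smul_update (ha : (a : ℕ) + 1 = q) (μ : ℝ) (j : ℕ) :
    betaVec q μ j =
      (√((q : ℝ) - 1 + xJ q μ j ^ 2))⁻¹ • Function.update (1 : Fin q → ℝ) a (xJ q μ j) := by
  ext k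
  simp [betaVec, Function.update_apply, val_add_one_eq_iff_eq ha]

end LastCoordinate

lemma betaVec_ne_zero {q : ℕ} (hq : 2 ≤ q) (μ : ℝ) (j : ℕ) : betaVec q μ j ≠ 0 := by
  have : Nontrivial (Fin q) := Fin.nontrivial_iff_two_le.mpr hq
  obtain ⟨a, ha⟩ := exists_val_add_one_eq (q := q) (by omega)
  rw [betaVec_eq_smul_update ha]
  exact smul_ne_zero (inv_ne_zero (sqrt_sub_one_add_xJ_sq_pos hq μ j).ne')
    (update_one_ne_zero a _)

lemma Cmat_mulVec_betaVec {q : ℕ} (hq : q ≠ 0) (μ : ℝ) (j : ℕ) :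
    (Cmat q μ).mulVec (betaVec q μ j) = lamJ q μ j • betaVec q μ j := by
  obtain ⟨a, ha⟩ := exists_val_add_one_eq hq
  have h_ne : -(1 / (q : ℝ)) * (Fintype.card (Fin q) - 1 + xJ q μ j) = lamJ q μ j := by
    rw [Fintype.card_fin, neg_one_div_mul_sub_one_add_xJ hq]
  rw [Cmat_eq_const_add_single ha, betaVec_eq_smul_update ha, Matrix.mulVec_smul,
    const_add_single_mulVec_update_one_eq_smul a h_ne (lamJ_add_mul_xJ hq μ j), smul_comm]

theorem beta_eigenvector_of_C_general (q : ℕ) (hq : 2 ≤ q) (μ : ℝ) (j : ℕ) :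
    Module.End.HasEigenvector (Matrix.toLin' (Cmat q μ)) (lamJ q μ j) (betaVec q μ j) :=
  Module.End.hasEigenvector_iff.mpr
    ⟨Module.End.mem_eigenspace_iff.mpr (Cmat_mulVec_betaVec (by omega) μ j),
      betaVec_ne_zero hq μ j⟩

/-- part of Theorem 2 of the paper.
For `j ∈ {1,2}`, the vector `β_j` is an eigenvector of `C^(q)` with eigenvalue `λ_j`. -/
theorem beta_eigenvector_of_C
    (q : ℕ) (hq : 2 ≤ q) (μ : ℝ) (hμ : 0 < μ)
    (j : ℕ) (hj : j = 1 ∨ j = 2) :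
    (Cmat q μ).mulVec (betaVec q μ j) = lamJ q μ j • betaVec q μ j :=
  (beta_eigenvector_of_C_general q hq μ j).apply_eq_smul

end
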